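/- Let A = 𝔽₂[ω₁, ω₂, …] be the polynomial ring over 𝔽₂ on variables ω_n indexed by the positive integers, I ⊆ A the ideal generated by the squares ω_n² (n ≥ 1), π : A → A/I the quotient map, and Δ : A → A ⊗_{𝔽₂} A the Whitney-sum comultiplication. Then for any c ∈ A the following are equivalent: (i) c lies in the 𝔽₂-subalgebra of A generated by the squares {ω_n² : n ≥ 1}; (ii) (π ⊗ id)(Δ c) = 1 ⊗ c in (A/I) ⊗_{𝔽₂} A (i.e. c is complexifiable in the algebraic model). -/

import Mathlib

open MvPolynomial TensorProduct

noncomputable section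

/-- `𝔽₂`, the field with two elements. -/
abbrev F2 := ZMod 2

/-- `A = 𝔽₂[ω₁, ω₂, …]`, the polynomial ring on variables indexed by positive
integers, modelling `H^*(BO; ℤ/2)`. -/
abbrev A := MvPolynomial ℕ+ F2

/-- `ω_n` for `n : ℕ`, with the convention `ω₀ = 1`. -/
noncomputable def sw (n : ℕ) : A := if h : 0 < n then X (⟨n, h⟩ : ℕ+) else 1

/-- The Whitney-sum comultiplication `Δ : A → A ⊗ A`,
`Δ(ω_n) = Σ_{i+j=n} ω_i ⊗ ω_j`. -/
noncomputable def whitneyComul : A →ₐ[F2] A ⊗[F2] A :=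
  aeval fun n : ℕ+ =>
    ∑ i ∈ Finset.range ((n : ℕ) + 1), sw i ⊗ₜ[F2] sw ((n : ℕ) - i)

/-- The ideal `I ⊆ A` generated by the squares `ω_n²`. -/
noncomputable def sqIdeal : Ideal A := Ideal.span (Set.range fun n : ℕ+ => (X n : A) ^ 2)

/-- The quotient map `π : A → A/I` as an algebra homomorphism. -/
noncomputable def qmap : A →ₐ[F2] A ⧸ sqIdeal := Ideal.Quotient.mkₐ F2 sqIdeal

/-! Write `Δ ω_n = 1 ⊗ ω_n + ∑_{i ≤ n} ω_i ⊗ q_{n,i}`; for the Whitney sum `q_{n,i} = ω_{n-i}`.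
Modulo `p`-th powers of the variables (here `p = 2`), Frobenius leaves only `1 ⊗ ω_n ^ p` in
`(π ⊗ id) (Δ (ω_n ^ p))`. Conversely, since `2 ≤ p`, the map `A/I → A[ε]` sending `ω_i` to `ε`
and every other variable to `0` is well defined; it turns `(π ⊗ id) ∘ Δ` into `c ↦ c + ε D_i c`,
where `D_i` is the derivation with `D_i ω_n = q_{n,i}`. So a complexifiable `c` is annihilated by
every `D_i`. The matrix `q` is triangular with regular diagonal, hence `c` is annihilated by every
`∂/∂ω_i`, and in characteristic `p` only monomials in the `ω_i ^ p` can occur in it. -/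

section CharP

lemma charP_of_algebra (R S : Type*) [CommRing R] [CommRing S] [Algebra R S] [Nontrivial S]
    (p : ℕ) [Fact p.Prime] [CharP R p] : CharP S p := by
  rw [CharP.charP_iff_prime_eq_zero Fact.out, ← map_natCast (algebraMap R S),
    CharP.cast_eq_zero, map_zero]

variable {σ R : Type*} [CommRing R] (p : ℕ) [Fact p.Prime] [CharP R p]

lemma one_tmul_add_sum_tmul_pow_char {S T ι : Type*} [CommRing S] [CommRing T] [Algebra R S]
    [Algebra R T] (s : Finset ι) {a : ι → S} (ha : ∀ i ∈ s, a i ^ p = 0) (b : ι → T) (t : T) :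
    ((1 : S) ⊗ₜ[R] t + ∑ i ∈ s, a i ⊗ₜ[R] b i) ^ p = 1 ⊗ₜ[R] (t ^ p) := by
  nontriviality S ⊗[R] T
  have := charP_of_algebra R (S ⊗[R] T) p
  have hsum : ∑ i ∈ s, (a i ⊗ₜ[R] b i) ^ p = 0 := Finset.sum_eq_zero fun i hi => by
    rw [Algebra.TensorProduct.tmul_pow, ha i hi, zero_tmul]
  rw [add_pow_char, sum_pow_char, hsum, add_zero, Algebra.TensorProduct.tmul_pow, one_pow]

lemma dvd_of_mem_support_of_pderiv_eq_zero {f : MvPolynomial σ R} {i : σ} (hf : pderiv i f = 0)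
    {m : σ →₀ ℕ} (hm : m ∈ f.support) : p ∣ m i := by
  by_contra hdvd
  have hpos : m i ≠ 0 := fun h => hdvd (h ▸ dvd_zero p)
  have hcoeff : coeff m f * (m i : R) = 0 := by
    obtain ⟨k, rfl⟩ : ∃ k, m = k + Finsupp.single i 1 :=
      ⟨_, (tsub_add_cancel_of_le <|
        Finsupp.single_le_iff.2 <| Nat.one_le_iff_ne_zero.2 hpos).symm⟩
    simpa only [hf, coeff_zero, Finsupp.add_apply, Finsupp.single_eq_same, Nat.cast_add,
      Nat.cast_one] using (coeff_pderiv (i := i) f k).symm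
  have hunit : IsUnit (m i : R) := (CharP.isUnit_natCast_iff Fact.out).2 hdvd
  exact mem_support_iff.1 hm (hunit.mul_left_eq_zero.1 hcoeff)

end CharP

section MvPolynomial

variable {σ R : Type*}

lemma mem_adjoin_X_pow_of_forall_dvd [CommSemiring R] {n : ℕ} {f : MvPolynomial σ R}
    (hf : ∀ m ∈ f.support, ∀ i, n ∣ m i) :
    f ∈ Algebra.adjoin R (Set.range fun i : σ => (X i : MvPolynomial σ R) ^ n) := by
  rw [f.as_sum]
  refine Subalgebra.sum_mem _ fun m hm => ?_
  rw [monomial_eq]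
  refine Subalgebra.mul_mem _ (Subalgebra.algebraMap_mem _ _) <|
    Subalgebra.prod_mem _ fun i _ => ?_
  obtain ⟨k, hk⟩ := hf m hm i
  simp only [hk, pow_mul]
  exact Subalgebra.pow_mem _ (Algebra.subset_adjoin (Set.mem_range_self i)) k

lemma derivation_apply_eq_sum_pderiv_smul [CommSemiring R] {M : Type*} [AddCommMonoid M]
    [Module R M] [Module (MvPolynomial σ R) M] [IsScalarTower R (MvPolynomial σ R) M]
    (D : Derivation R (MvPolynomial σ R) M) (f : MvPolynomial σ R) :
    D f = ∑ i ∈ f.vars, pderiv i f • D (X i) := by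
  classical
  let E : Derivation R (MvPolynomial σ R) M :=
    ∑ i ∈ f.vars, (LinearMap.toSpanSingleton _ M (D (X i))).compDer (pderiv i)
  have hE (g : MvPolynomial σ R) : E g = ∑ i ∈ f.vars, pderiv i g • D (X i) := by
    rw [← Derivation.coeFnAddMonoidHom_apply, map_sum, Finset.sum_apply]
    rfl
  rw [← hE]
  refine derivation_eq_of_forall_mem_vars fun j hj => ?_
  simp [hE, pderiv_X, Pi.single_apply, hj]

lemma pderiv_eq_zero_of_triangular_derivations [CommRing R] [PartialOrder σ]
    {D : σ → Derivation R (MvPolynomial σ R) (MvPolynomial σ R)}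
    (hD : ∀ i j, ¬ i ≤ j → D i (X j) = 0)
    (hdiag : ∀ i, D i (X i) ∈ nonZeroDivisors (MvPolynomial σ R))
    {f : MvPolynomial σ R} (hf : ∀ i, D i f = 0) (i : σ) : pderiv i f = 0 := by
  classical
  by_contra hi
  let S := f.vars.filter fun j => pderiv j f ≠ 0
  have mem_S {j : σ} (hj : pderiv j f ≠ 0) : j ∈ S :=
    Finset.mem_filter.2 ⟨not_imp_comm.1 pderiv_eq_zero_of_notMem_vars hj, hj⟩
  obtain ⟨k, hkS, hkmax⟩ := S.exists_maximal ⟨i, mem_S hi⟩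
  have hsum : D k f = pderiv k f * D k (X k) := by
    rw [derivation_apply_eq_sum_pderiv_smul]
    refine Finset.sum_eq_single_of_mem k (Finset.mem_filter.1 hkS).1 fun j _ hjk => ?_
    by_cases hj : pderiv j f = 0
    · rw [hj, zero_smul]
    · have hkj : ¬ k ≤ j := fun hkj => hjk ((hkmax (mem_S hj) hkj).antisymm hkj)
      rw [hD k j hkj, smul_zero]
  rw [hf k, eq_comm, mul_right_mem_nonZeroDivisors_eq_zero_iff (hdiag k)] at hsum
  exact (Finset.mem_filter.1 hkS).2 hsum

lemma aeval_inl_X_add_inr [CommSemiring R] (v : σ → MvPolynomial σ R) (f : MvPolynomial σ R) :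
    aeval (fun i => (TrivSqZeroExt.inl (X i) + TrivSqZeroExt.inr (v i) :
      DualNumber (MvPolynomial σ R))) f =
      TrivSqZeroExt.inl f + TrivSqZeroExt.inr (mkDerivation R v f) := by
  induction f using MvPolynomial.induction_on with
  | C a =>
    rw [derivation_C, TrivSqZeroExt.inr_zero, add_zero, aeval_C]
    rfl
  | add f g hf hg =>
    simp only [map_add, hf, hg, TrivSqZeroExt.inl_add, TrivSqZeroExt.inr_add]
    abel
  | mul_X f i hf =>
    rw [map_mul, hf, aeval_X, Derivation.leibniz, mkDerivation_X]
    ext1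
    · simp
    · simp [mul_comm, add_comm]

end MvPolynomial

section TruncatedPolynomials

open scoped DualNumber

variable (σ R : Type*) [CommRing R] (n : ℕ)

/-- The ideal generated by the `n`-th powers of the variables; for `n = 2` it models the kernel of
`H^*(BO) → H^*(U/O)`. -/
def varPowIdeal : Ideal (MvPolynomial σ R) :=
  Ideal.span (Set.range fun i : σ => (X i : MvPolynomial σ R) ^ n)

variable {σ R n}

lemma mk_X_pow_eq_zero (i : σ) :
    (Ideal.Quotient.mkₐ R (varPowIdeal σ R n) (X i)) ^ n = 0 := by
  rw [← map_pow]
  exact Ideal.Quotient.eq_zero_iff_mem.2 (Ideal.subset_span ⟨i, rfl⟩)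

section DualNumbers

variable (R) (S : Type*) [CommRing S] [Algebra R S] [DecidableEq σ]

/-- The tangent vector at the origin of `R[σ] / (X_j ^ n)` in the direction of `X_i`, as the
evaluation `X_i ↦ ε`, `X_j ↦ 0` for `j ≠ i`, with values in the dual numbers over an algebra `S`. -/
def tangentEval (hn : 2 ≤ n) (i : σ) : MvPolynomial σ R ⧸ varPowIdeal σ R n →ₐ[R] S[ε] :=
  Ideal.Quotient.liftₐ (varPowIdeal σ R n) (aeval fun j => if j = i then ε else 0) <| by
    suffices varPowIdeal σ R n ≤
      RingHom.ker (aeval (R := R) fun j => if j = i then (ε : S[ε]) else 0) from this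
    refine Ideal.span_le.2 ?_
    rintro _ ⟨j, rfl⟩
    rw [SetLike.mem_coe, RingHom.mem_ker, map_pow, aeval_X]
    refine pow_eq_zero_of_le hn ?_
    split_ifs
    exacts [DualNumber.eps_pow_two, zero_pow two_ne_zero]

/-- The `S`-linear extension of `tangentEval`, which reads off the part of a tensor whose left
factor is linear in `X_i`. -/
def tangentContraction (hn : 2 ≤ n) (i : σ) :
    (MvPolynomial σ R ⧸ varPowIdeal σ R n) ⊗[R] S →ₐ[R] S[ε] :=
  Algebra.TensorProduct.lift (tangentEval R S hn i) (TrivSqZeroExt.inlAlgHom R S S)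
    fun _ _ => Commute.all _ _

variable {R S}

lemma tangentContraction_one_tmul (hn : 2 ≤ n) (i : σ) (s : S) :
    tangentContraction R S hn i (1 ⊗ₜ[R] s) = TrivSqZeroExt.inl s := by
  simp [tangentContraction]

lemma tangentContraction_X_tmul (hn : 2 ≤ n) (i j : σ) (s : S) :
    tangentContraction R S hn i (Ideal.Quotient.mkₐ R (varPowIdeal σ R n) (X j) ⊗ₜ[R] s) =
      if j = i then TrivSqZeroExt.inr s else 0 := by
  have heval : tangentEval R S hn i (Ideal.Quotient.mkₐ R (varPowIdeal σ R n) (X j)) =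
      if j = i then ε else 0 := aeval_X _ j
  rw [tangentContraction, Algebra.TensorProduct.lift_tmul, heval, ite_mul, zero_mul]
  congr 1
  rw [TrivSqZeroExt.inlAlgHom_apply, DualNumber.eps, TrivSqZeroExt.inr_mul_inl, op_smul_eq_mul,
    one_mul]

end DualNumbers

end TruncatedPolynomials

section TriangularComultiplication

/-- The composite `(π ⊗ id) ∘ Δ`, where `π` is reduction modulo `n`-th powers of the variables. -/
def truncatedComul {σ R : Type*} [CommRing R]
    (Δ : MvPolynomial σ R →ₐ[R] MvPolynomial σ R ⊗[R] MvPolynomial σ R) (n : ℕ) :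
    MvPolynomial σ R →ₐ[R] (MvPolynomial σ R ⧸ varPowIdeal σ R n) ⊗[R] MvPolynomial σ R :=
  (Algebra.TensorProduct.map (Ideal.Quotient.mkₐ R (varPowIdeal σ R n)) (AlgHom.id R _)).comp Δ

/-- The derivation `D_i` with `D_i X_n = q n i` for `i ≤ n` and `D_i X_n = 0` otherwise. It is the
linear part in direction `X_i` of a comultiplication `Δ` with
`Δ X_n = 1 ⊗ X_n + ∑ i ≤ n, X_i ⊗ q n i`. -/
def coeffDerivation {σ R : Type*} [Preorder σ] [CommRing R] (q : σ → σ → MvPolynomial σ R)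
    (i : σ) : Derivation R (MvPolynomial σ R) (MvPolynomial σ R) :=
  mkDerivation R ((Set.Ici i).indicator fun n => q n i)

lemma pderiv_eq_zero_of_coeffDerivation_eq_zero {σ R : Type*} [PartialOrder σ] [CommRing R]
    {q : σ → σ → MvPolynomial σ R} (hq : ∀ n, q n n ∈ nonZeroDivisors (MvPolynomial σ R))
    {c : MvPolynomial σ R} (hc : ∀ i, coeffDerivation q i c = 0) (i : σ) : pderiv i c = 0 := by
  refine pderiv_eq_zero_of_triangular_derivations (D := coeffDerivation q)
    (fun i n hin => ?_) (fun n => ?_) hc i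
  · rw [coeffDerivation, mkDerivation_X, Set.indicator_of_notMem (mt Set.mem_Ici.1 hin)]
  · rw [coeffDerivation, mkDerivation_X, Set.indicator_of_mem Set.self_mem_Ici]
    exact hq n

variable {σ R : Type*} [Preorder σ] [LocallyFiniteOrderBot σ] [CommRing R]
  {q : σ → σ → MvPolynomial σ R}
  {Δ : MvPolynomial σ R →ₐ[R] MvPolynomial σ R ⊗[R] MvPolynomial σ R}

lemma truncatedComul_X
    (hΔ : ∀ n, Δ (X n) = 1 ⊗ₜ X n + ∑ i ∈ Finset.Iic n, X i ⊗ₜ q n i)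
    (k : ℕ) (n : σ) :
    truncatedComul Δ k (X n) =
      1 ⊗ₜ X n + ∑ i ∈ Finset.Iic n, Ideal.Quotient.mkₐ R (varPowIdeal σ R k) (X i) ⊗ₜ q n i := by
  simp only [truncatedComul, AlgHom.comp_apply, hΔ, map_add, map_sum,
    Algebra.TensorProduct.map_tmul, map_one, AlgHom.id_apply]

lemma truncatedComul_X_pow_char (p : ℕ) [Fact p.Prime] [CharP R p]
    (hΔ : ∀ n, Δ (X n) = 1 ⊗ₜ X n + ∑ i ∈ Finset.Iic n, X i ⊗ₜ q n i)
    (n : σ) :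
    truncatedComul Δ p (X n ^ p) = 1 ⊗ₜ (X n ^ p) := by
  rw [truncatedComul, AlgHom.comp_apply, map_pow, map_pow, ← AlgHom.comp_apply, ← truncatedComul,
    truncatedComul_X hΔ]
  exact one_tmul_add_sum_tmul_pow_char p _ (fun i _ => mk_X_pow_eq_zero i) _ _

lemma tangentContraction_truncatedComul [DecidableEq σ]
    (hΔ : ∀ n, Δ (X n) = 1 ⊗ₜ X n + ∑ i ∈ Finset.Iic n, X i ⊗ₜ q n i)
    {k : ℕ} (hk : 2 ≤ k) (i : σ) (c : MvPolynomial σ R) :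
    tangentContraction R (MvPolynomial σ R) hk i (truncatedComul Δ k c) =
      TrivSqZeroExt.inl c + TrivSqZeroExt.inr (coeffDerivation q i c) := by
  rw [coeffDerivation, ← aeval_inl_X_add_inr]
  suffices (tangentContraction R (MvPolynomial σ R) hk i).comp (truncatedComul Δ k) = aeval _ from
    DFunLike.congr_fun this c
  refine algHom_ext fun n => ?_
  rw [AlgHom.comp_apply, truncatedComul_X hΔ, aeval_X, map_add, map_sum,
    tangentContraction_one_tmul]
  congr 1
  rw [Finset.sum_congr rfl fun j _ => tangentContraction_X_tmul hk i j (q n j), Finset.sum_ite_eq']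
  by_cases hin : i ≤ n
  · rw [if_pos (Finset.mem_Iic.2 hin), Set.indicator_of_mem (Set.mem_Ici.2 hin)]
  · rw [if_neg (mt Finset.mem_Iic.1 hin), Set.indicator_of_notMem (mt Set.mem_Ici.1 hin),
      TrivSqZeroExt.inr_zero]

lemma coeffDerivation_eq_zero_of_truncatedComul_eq
    (hΔ : ∀ n, Δ (X n) = 1 ⊗ₜ X n + ∑ i ∈ Finset.Iic n, X i ⊗ₜ q n i)
    {k : ℕ} (hk : 2 ≤ k) {c : MvPolynomial σ R} (hc : truncatedComul Δ k c = 1 ⊗ₜ c) (i : σ) :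
    coeffDerivation q i c = 0 := by
  classical
  have h := tangentContraction_truncatedComul hΔ hk i c
  rw [hc, tangentContraction_one_tmul, left_eq_add] at h
  exact TrivSqZeroExt.inr_injective h

end TriangularComultiplication

theorem complexifiable_iff_in_subring_of_squares_general {σ R : Type*} [PartialOrder σ]
    [LocallyFiniteOrderBot σ] [CommRing R] (p : ℕ) [Fact p.Prime] [CharP R p]
    {Δ : MvPolynomial σ R →ₐ[R] MvPolynomial σ R ⊗[R] MvPolynomial σ R}
    {q : σ → σ → MvPolynomial σ R}
    (hΔ : ∀ n, Δ (X n) = 1 ⊗ₜ X n + ∑ i ∈ Finset.Iic n, X i ⊗ₜ q n i)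
    (hq : ∀ n, q n n ∈ nonZeroDivisors (MvPolynomial σ R)) (c : MvPolynomial σ R) :
    c ∈ Algebra.adjoin R (Set.range fun n : σ => (X n : MvPolynomial σ R) ^ p) ↔
    truncatedComul Δ p c = 1 ⊗ₜ c := by
  constructor
  · intro hc
    have hle : Algebra.adjoin R (Set.range fun n : σ => (X n : MvPolynomial σ R) ^ p) ≤
        AlgHom.equalizer (truncatedComul Δ p) Algebra.TensorProduct.includeRight := by
      refine Algebra.adjoin_le ?_
      rintro _ ⟨n, rfl⟩
      exact (AlgHom.mem_equalizer _ _ _).2 (truncatedComul_X_pow_char p hΔ n)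
    exact hle hc
  · intro hc
    have hpderiv : ∀ i, pderiv i c = 0 := pderiv_eq_zero_of_coeffDerivation_eq_zero hq
      (coeffDerivation_eq_zero_of_truncatedComul_eq hΔ (Fact.out : p.Prime).two_le hc)
    exact mem_adjoin_X_pow_of_forall_dvd fun m hm i =>
      dvd_of_mem_support_of_pderiv_eq_zero p (hpderiv i) hm

lemma sw_coe (n : ℕ+) : sw n = X n := dif_pos n.pos

lemma sw_zero : sw 0 = 1 := dif_neg (lt_irrefl 0)

lemma whitneyComul_X (n : ℕ+) :
    whitneyComul (X n) = 1 ⊗ₜ X n + ∑ i ∈ Finset.Iic n, X i ⊗ₜ sw (n - i : ℕ) := by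
  rw [whitneyComul, aeval_X, Finset.sum_range_succ', add_comm, sw_zero, Nat.sub_zero, sw_coe]
  congr 1
  refine Finset.sum_nbij' Nat.succPNat PNat.natPred ?_ ?_ ?_ ?_ ?_
  · intro i hi
    exact Finset.mem_Iic.2 (Finset.mem_range.1 hi)
  · intro i hi
    rw [Finset.mem_range, ← Nat.succ_le_iff, Nat.succ_eq_add_one, PNat.natPred_add_one]
    exact PNat.coe_le_coe _ _ |>.2 (Finset.mem_Iic.1 hi)
  · exact fun i _ => Nat.natPred_succPNat i
  · exact fun i _ => PNat.succPNat_natPred i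
  · exact fun i _ => by rw [← sw_coe, Nat.succPNat_coe]

theorem complexifiable_iff_in_subring_of_squares (c : A) :
    c ∈ Algebra.adjoin F2 (Set.range fun n : ℕ+ => (X n : A) ^ 2) ↔
    (Algebra.TensorProduct.map qmap (AlgHom.id F2 A)) (whitneyComul c)
      = (1 : A ⧸ sqIdeal) ⊗ₜ[F2] c :=
  complexifiable_iff_in_subring_of_squares_general 2 whitneyComul_X
    (fun n => by rw [Nat.sub_self, sw_zero]; exact one_mem _) c
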